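/- Let H be a real Hilbert space, Ā_n a bounded linear operator on H, g_n ∈ H, ν ∈ H with ‖ν‖ = 1, and α, a₁, a₂, T > 0. Define û_n(t) := (α a₂/(2a₁))·⟨g_n, exp((T−t)Ā_n)ν⟩ and û_{n,M}(t) := (α a₂/(2a₁))·⟨g_n, Σ_{k=0}^M ((T−t)^k/k!)·Ā_n^k ν⟩. Then for every M ∈ ℕ with M ≥ T·‖Ā_n‖ one has sup_{t∈[0,T]} |û_n(t) − û_{n,M}(t)| ≤ (α a₂/(2a₁))·‖g_n‖·e^{T‖Ā_n‖}·(1 − e^{−T‖Ā_n‖/(M+1)}), and this bound tends to 0 as M → ∞; in particular û_{n,M} converges uniformly on [0,T] to û_n as M → ∞. -/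

import Mathlib

/-- The lifted optimal control `û_n(t) = (α a₂/(2a₁)) ⟨g_n, exp((T−t) Ā_n) ν⟩`. -/
noncomputable def uhat {H : Type*} [NormedAddCommGroup H] [InnerProductSpace ℝ H]
    [CompleteSpace H] (An : H →L[ℝ] H) (gn ν : H) (α a₁ a₂ T : ℝ) (t : ℝ) : ℝ :=
  (α * a₂ / (2 * a₁)) * (inner ℝ gn (NormedSpace.exp ((T - t) • An) ν) : ℝ)

/-- The truncated control `û_{n,M}(t) = (α a₂/(2a₁)) ⟨g_n, ∑_{k=0}^M ((T−t)^k/k!) Ā_n^k ν⟩`. -/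
noncomputable def uhatTrunc {H : Type*} [NormedAddCommGroup H] [InnerProductSpace ℝ H]
    [CompleteSpace H] (An : H →L[ℝ] H) (gn ν : H) (α a₁ a₂ T : ℝ) (M : ℕ) (t : ℝ) : ℝ :=
  (α * a₂ / (2 * a₁)) * (inner ℝ gn (∑ k ∈ Finset.range (M + 1),
    ((T - t) ^ k / (k.factorial : ℝ)) • ((An ^ k) ν)) : ℝ)

/-!
The remainder of the exponential series at `B` is dominated in norm by the remainder of the scalar
series at `x = ‖B‖`, which is `eˣ` times the probability that a Poisson variable of mean `x`
exceeds `M`. Put `x = r (M + 1)` with `0 ≤ r ≤ 1`. The claim `P(Poisson (r (M + 1)) ≤ M) ≥ e⁻ʳ` is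
an equality for `M = 0`, and its left side is nondecreasing in `M`: from `M` to `M + 1` one gains
the mass at `M + 1`, while moving the mean from `r (M + 1)` to `r (M + 2)` costs at most as much.
-/

open Filter Set Topology

open scoped Nat

section Poisson

/-- The mass at `k` of the Poisson distribution of mean `x`. Unlike in
`ProbabilityTheory.poissonPMFReal`, the mean is a real number, so that one can differentiate
in it. -/
noncomputable def poissonMass (k : ℕ) (x : ℝ) : ℝ :=
  Real.exp (-x) * (x ^ k / k !)

/-- The probability that a Poisson variable of mean `x` is at most `M`, as a function of `x : ℝ`. -/
noncomputable def poissonCDF (M : ℕ) (x : ℝ) : ℝ :=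
  ∑ k ∈ Finset.range (M + 1), poissonMass k x

lemma poissonMass_zero (x : ℝ) : poissonMass 0 x = Real.exp (-x) := by
  simp [poissonMass]

lemma poissonCDF_zero (x : ℝ) : poissonCDF 0 x = Real.exp (-x) := by
  simp [poissonCDF, poissonMass_zero]

lemma poissonCDF_succ (M : ℕ) (x : ℝ) :
    poissonCDF (M + 1) x = poissonCDF M x + poissonMass (M + 1) x :=
  Finset.sum_range_succ _ _

lemma exp_mul_poissonCDF (M : ℕ) (x : ℝ) :
    Real.exp x * poissonCDF M x = ∑ k ∈ Finset.range (M + 1), x ^ k / k ! := by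
  simp only [poissonCDF, poissonMass, ← Finset.mul_sum, ← mul_assoc, ← Real.exp_add,
    add_neg_cancel, Real.exp_zero, one_mul]

lemma hasDerivAt_poissonMass_succ (k : ℕ) (x : ℝ) :
    HasDerivAt (poissonMass (k + 1)) (poissonMass k x - poissonMass (k + 1) x) x := by
  refine ((hasDerivAt_neg x).exp.mul
    ((hasDerivAt_pow (k + 1) x).div_const ((k + 1)! : ℝ))).congr_deriv ?_
  simp only [poissonMass, Nat.factorial_succ, Nat.add_sub_cancel, Nat.cast_mul]
  field_simp
  ring

lemma hasDerivAt_poissonCDF (M : ℕ) (x : ℝ) :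
    HasDerivAt (poissonCDF M) (-poissonMass M x) x := by
  induction M with
  | zero =>
    rw [funext poissonCDF_zero, poissonMass_zero]
    simpa using (hasDerivAt_neg x).exp
  | succ M ih =>
    rw [funext (poissonCDF_succ M)]
    exact (ih.add (hasDerivAt_poissonMass_succ M x)).congr_deriv (by ring)

lemma pow_le_natCast_pow_mul_exp_sub {y : ℝ} (hy : 0 ≤ y) (n : ℕ) :
    y ^ n ≤ n ^ n * Real.exp (y - n) := by
  rcases eq_or_ne n 0 with rfl | hn
  · simpa using hy
  have hn' : (n : ℝ) ≠ 0 := Nat.cast_ne_zero.mpr hn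
  calc y ^ n = n ^ n * (1 - (n - y) / n) ^ n := by rw [← mul_pow]; congr 1; field_simp; ring
    _ ≤ n ^ n * Real.exp (-(n - y)) := by
      gcongr
      exact Real.one_sub_div_pow_le_exp_neg (by linarith)
    _ = n ^ n * Real.exp (y - n) := by rw [neg_sub]

lemma mul_poissonMass_le_poissonMass_mul_natCast {r y : ℝ} (hr : 0 ≤ r) (hr' : r ≤ 1)
    (n : ℕ) (hy : 0 ≤ y) (hyn : y ≤ n + 1) :
    r * poissonMass n (r * y) ≤ poissonMass n (r * n) := by
  have hr_exp : r ≤ Real.exp (r - 1) := by linarith [Real.add_one_le_exp (r - 1)]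
  have hexponent : (r - 1) + -(r * y) + (y - n) ≤ -(r * n) := by nlinarith
  calc r * poissonMass n (r * y)
      = r * Real.exp (-(r * y)) * y ^ n * (r ^ n / n !) := by
        rw [poissonMass, mul_pow]; ring
    _ ≤ Real.exp (r - 1) * Real.exp (-(r * y)) * (n ^ n * Real.exp (y - n)) * (r ^ n / n !) := by
        gcongr
        exact pow_le_natCast_pow_mul_exp_sub hy n
    _ = Real.exp ((r - 1) + -(r * y) + (y - n)) * ((r * n) ^ n / n !) := by
        rw [Real.exp_add, Real.exp_add, mul_pow]; ring
    _ ≤ poissonMass n (r * n) := by rw [poissonMass]; gcongr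

lemma poissonCDF_sub_poissonMass_le_poissonCDF {r : ℝ} (hr : 0 ≤ r) (hr' : r ≤ 1) (n : ℕ) :
    poissonCDF n (r * n) - poissonMass n (r * n) ≤ poissonCDF n (r * (n + 1)) := by
  have hderiv (y : ℝ) :
      HasDerivAt (fun y ↦ poissonCDF n (r * y)) (-(r * poissonMass n (r * y))) y :=
    ((hasDerivAt_poissonCDF n (r * y)).comp y ((hasDerivAt_id y).const_mul r)).congr_deriv
      (by ring)
  obtain ⟨y, ⟨hny, hyn⟩, hslope⟩ := exists_hasDerivAt_eq_slope _ _ (lt_add_one (n : ℝ))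
    (fun y _ ↦ (hderiv y).continuousAt.continuousWithinAt) (fun y _ ↦ hderiv y)
  rw [add_sub_cancel_left, div_one] at hslope
  have hmass := mul_poissonMass_le_poissonMass_mul_natCast hr hr' n
    (n.cast_nonneg.trans hny.le) hyn.le
  linarith

lemma monotone_poissonCDF_mul_add_one {r : ℝ} (hr : 0 ≤ r) (hr' : r ≤ 1) :
    Monotone fun M : ℕ ↦ poissonCDF M (r * (M + 1)) := by
  refine monotone_nat_of_le_succ fun M ↦ ?_
  have h := poissonCDF_sub_poissonMass_le_poissonCDF hr hr' (M + 1)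
  rw [poissonCDF_succ M, add_sub_cancel_right] at h
  simpa only [Nat.cast_succ] using h

lemma exp_neg_div_le_poissonCDF {x : ℝ} {M : ℕ} (hx : 0 ≤ x) (hxM : x ≤ M + 1) :
    Real.exp (-x / (M + 1)) ≤ poissonCDF M x := by
  have hM : (0 : ℝ) < M + 1 := by positivity
  have h := monotone_poissonCDF_mul_add_one (div_nonneg hx hM.le) ((div_le_one hM).mpr hxM)
    M.zero_le
  simpa [poissonCDF_zero, neg_div, div_mul_cancel₀ x hM.ne'] using h

lemma exp_sub_sum_le_exp_mul_one_sub_exp {x : ℝ} {M : ℕ} (hx : 0 ≤ x) (hxM : x ≤ M + 1) :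
    Real.exp x - ∑ k ∈ Finset.range (M + 1), x ^ k / k ! ≤
      Real.exp x * (1 - Real.exp (-x / (M + 1))) := by
  rw [← exp_mul_poissonCDF, ← mul_one_sub]
  gcongr
  exact exp_neg_div_le_poissonCDF hx hxM

end Poisson

lemma exp_mul_one_sub_exp_neg_div_le {x y : ℝ} (M : ℕ) (hx : 0 ≤ x) (hxy : x ≤ y) :
    Real.exp x * (1 - Real.exp (-x / (M + 1))) ≤ Real.exp y * (1 - Real.exp (-y / (M + 1))) := by
  have hle_one : Real.exp (-x / (M + 1)) ≤ 1 :=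
    Real.exp_le_one_iff.mpr (div_nonpos_of_nonpos_of_nonneg (neg_nonpos.mpr hx) (by positivity))
  exact mul_le_mul (by gcongr) (by gcongr) (sub_nonneg.mpr hle_one) (Real.exp_pos y).le

lemma tendsto_one_sub_exp_neg_div_add_one (x : ℝ) :
    Tendsto (fun M : ℕ ↦ 1 - Real.exp (-x / (M + 1))) atTop (𝓝 0) := by
  have hdiv : Tendsto (fun M : ℕ ↦ -x / ((M : ℝ) + 1)) atTop (𝓝 0) :=
    tendsto_const_nhds.div_atTop
      (tendsto_atTop_add_const_right _ _ tendsto_natCast_atTop_atTop)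
  simpa using hdiv.rexp.const_sub 1

section ExpSeries

variable {𝕂 : Type*} [RCLike 𝕂]

lemma norm_exp_sub_sum_le_exp_norm_sub_sum {𝔸 : Type*} [NormedRing 𝔸] [NormedAlgebra 𝕂 𝔸]
    [CompleteSpace 𝔸] (a : 𝔸) (M : ℕ) :
    ‖NormedSpace.exp a - ∑ k ∈ Finset.range (M + 1), (k !⁻¹ : 𝕂) • a ^ k‖ ≤
      Real.exp ‖a‖ - ∑ k ∈ Finset.range (M + 1), ‖a‖ ^ k / k ! := by
  have htail :=
    (hasSum_nat_add_iff' (M + 1)).mpr (NormedSpace.exp_series_hasSum_exp' (𝕂 := 𝕂) a)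
  have htail_norm := (hasSum_nat_add_iff' (M + 1)).mpr (NormedSpace.expSeries_div_hasSum_exp ‖a‖)
  rw [← Real.exp_eq_exp_ℝ] at htail_norm
  refine htail.norm_le_of_bounded htail_norm fun k ↦ ?_
  rw [norm_smul, norm_inv, RCLike.norm_natCast, div_eq_inv_mul]
  gcongr
  exact norm_pow_le' a (by lia)

lemma norm_exp_sub_sum_le {𝔸 : Type*} [NormedRing 𝔸] [NormedAlgebra 𝕂 𝔸] [CompleteSpace 𝔸]
    {a : 𝔸} {x : ℝ} {M : ℕ} (hax : ‖a‖ ≤ x) (hxM : x ≤ M + 1) :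
    ‖NormedSpace.exp a - ∑ k ∈ Finset.range (M + 1), (k !⁻¹ : 𝕂) • a ^ k‖ ≤
      Real.exp x * (1 - Real.exp (-x / (M + 1))) :=
  calc _ ≤ Real.exp ‖a‖ - ∑ k ∈ Finset.range (M + 1), ‖a‖ ^ k / k ! :=
        norm_exp_sub_sum_le_exp_norm_sub_sum a M
    _ ≤ Real.exp ‖a‖ * (1 - Real.exp (-‖a‖ / (M + 1))) :=
        exp_sub_sum_le_exp_mul_one_sub_exp (norm_nonneg a) (hax.trans hxM)
    _ ≤ _ := exp_mul_one_sub_exp_neg_div_le M (norm_nonneg a) hax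

lemma norm_exp_smul_apply_sub_sum_le {E : Type*} [NormedAddCommGroup E] [NormedSpace 𝕂 E]
    [CompleteSpace E] {A : E →L[𝕂] E} {s : 𝕂} {x : ℝ} {M : ℕ}
    (hx : ‖s‖ * ‖A‖ ≤ x) (hxM : x ≤ M + 1) (v : E) :
    ‖NormedSpace.exp (s • A) v - ∑ k ∈ Finset.range (M + 1), (s ^ k / (k ! : 𝕂)) • (A ^ k) v‖ ≤
      Real.exp x * (1 - Real.exp (-x / (M + 1))) * ‖v‖ := by
  have hsum : ∑ k ∈ Finset.range (M + 1), (s ^ k / (k ! : 𝕂)) • (A ^ k) v =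
      (∑ k ∈ Finset.range (M + 1), (k !⁻¹ : 𝕂) • (s • A) ^ k) v := by
    simp only [sum_apply, smul_apply, smul_pow, smul_smul, div_eq_inv_mul]
  rw [hsum, ← sub_apply]
  refine ContinuousLinearMap.le_of_opNorm_le _ (norm_exp_sub_sum_le ?_ hxM) v
  rwa [norm_smul]

end ExpSeries

lemma tendstoUniformlyOn_of_eventually_dist_le {ι α β : Type*} [PseudoMetricSpace β]
    {F : ι → α → β} {f : α → β} {l : Filter ι} {s : Set α} {b : ι → ℝ}
    (hb : Tendsto b l (𝓝 0)) (hF : ∀ᶠ i in l, ∀ x ∈ s, dist (f x) (F i x) ≤ b i) :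
    TendstoUniformlyOn F f l s := by
  rw [Metric.tendstoUniformlyOn_iff]
  intro ε hε
  filter_upwards [hF, hb.eventually_lt_const hε] with i hi hbi x hx
  exact (hi x hx).trans_lt hbi

lemma abs_uhat_sub_uhatTrunc_le {H : Type*} [NormedAddCommGroup H] [InnerProductSpace ℝ H]
    [CompleteSpace H] (An : H →L[ℝ] H) (gn ν : H) (α a₁ a₂ T t : ℝ) (M : ℕ) :
    |uhat An gn ν α a₁ a₂ T t - uhatTrunc An gn ν α a₁ a₂ T M t| ≤
      |α * a₂ / (2 * a₁)| * (‖gn‖ * ‖NormedSpace.exp ((T - t) • An) ν -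
        ∑ k ∈ Finset.range (M + 1), ((T - t) ^ k / (k ! : ℝ)) • (An ^ k) ν‖) := by
  rw [uhat, uhatTrunc, ← mul_sub, ← inner_sub_right, abs_mul]
  gcongr
  exact abs_real_inner_le_norm _ _

/-- For every `M ∈ ℕ` with `M ≥ T ‖Ā_n‖`,
`sup_{t∈[0,T]} |û_n(t) − û_{n,M}(t)| ≤ (α a₂/(2a₁)) ‖g_n‖ e^{T‖Ā_n‖} (1 − e^{−T‖Ā_n‖/(M+1)})`;
this bound tends to `0` as `M → ∞`, and in particular `û_{n,M}` converges uniformly on `[0,T]`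
to `û_n` as `M → ∞`. -/
theorem uhat_trunc_uniform_convergence
    {H : Type*} [NormedAddCommGroup H] [InnerProductSpace ℝ H] [CompleteSpace H]
    (An : H →L[ℝ] H) (gn ν : H) (hν : ‖ν‖ = 1)
    (α a₁ a₂ T : ℝ) (hα : 0 < α) (ha₁ : 0 < a₁) (ha₂ : 0 < a₂) (hT : 0 < T) :
    (∀ M : ℕ, T * ‖An‖ ≤ M → ∀ t ∈ Set.Icc (0 : ℝ) T,
      |uhat An gn ν α a₁ a₂ T t - uhatTrunc An gn ν α a₁ a₂ T M t| ≤
        (α * a₂ / (2 * a₁)) * ‖gn‖ * Real.exp (T * ‖An‖) *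
          (1 - Real.exp (-(T * ‖An‖) / (M + 1)))) ∧
    Filter.Tendsto
      (fun M : ℕ => (α * a₂ / (2 * a₁)) * ‖gn‖ * Real.exp (T * ‖An‖) *
        (1 - Real.exp (-(T * ‖An‖) / (M + 1)))) Filter.atTop (nhds 0) ∧
    TendstoUniformlyOn (fun M : ℕ => uhatTrunc An gn ν α a₁ a₂ T M)
      (uhat An gn ν α a₁ a₂ T) Filter.atTop (Set.Icc (0 : ℝ) T) := by
  have hbound : ∀ M : ℕ, T * ‖An‖ ≤ M → ∀ t ∈ Icc (0 : ℝ) T,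
      |uhat An gn ν α a₁ a₂ T t - uhatTrunc An gn ν α a₁ a₂ T M t| ≤
        (α * a₂ / (2 * a₁)) * ‖gn‖ * Real.exp (T * ‖An‖) *
          (1 - Real.exp (-(T * ‖An‖) / (M + 1))) := by
    intro M hM t ht
    have htime : ‖T - t‖ * ‖An‖ ≤ T * ‖An‖ := by
      rw [Real.norm_of_nonneg (sub_nonneg.mpr ht.2)]
      gcongr
      exact sub_le_self T ht.1
    have hexp := norm_exp_smul_apply_sub_sum_le htime (hM.trans (lt_add_one _).le) ν
    rw [hν, mul_one] at hexp
    refine (abs_uhat_sub_uhatTrunc_le An gn ν α a₁ a₂ T t M).trans ?_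
    rw [abs_of_pos (by positivity), mul_assoc, mul_assoc]
    gcongr
  have hlim := (tendsto_one_sub_exp_neg_div_add_one (T * ‖An‖)).const_mul
    ((α * a₂ / (2 * a₁)) * ‖gn‖ * Real.exp (T * ‖An‖))
  rw [mul_zero] at hlim
  refine ⟨hbound, hlim, tendstoUniformlyOn_of_eventually_dist_le hlim ?_⟩
  filter_upwards [tendsto_natCast_atTop_atTop.eventually_ge_atTop (T * ‖An‖)] with M hM
  exact hbound M hM
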